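/- E(2) = 10 log 2, where E(p) := c_{2p}/c_p² + 4 log 2, c_p := a_p K_{p/2}/√2, a_p := 2^{p/2} Γ((p+1)/2)/√π, and K_q := ∫_0^∞ t^q H(t) dt with H(t) := 4 e^{−t} √(e^{−t} sinh t) / (π (1 − e^{−2t})²). Equivalently, c_2 = 1 and c_4 = 6 log 2. -/

import Mathlib

/-!
Since `e^{-t} sinh t = (1 - e^{-2t})/2`, the substitution `t = -log (sin θ)`, `0 < θ < π/2`, turns
`K_q` into `4/(√2 π) ∫₀^{π/2} (-log (sin θ))^q / cos² θ dθ` (`K_eq_integral`). Integrating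
`1/cos²` to `tan` removes the singularity at `π/2`:
* for `q = 1` an antiderivative is `θ - tan θ · log (sin θ)`, whence the integral is `π/2`;
* for `q = 2` an antiderivative is `tan θ · log² (sin θ) - 2 ∫₀^θ log (sin x) dx`, and the classical
  value `∫₀^{π/2} log (sin x) dx = -(π/2) log 2` gives `π log 2`.

Both boundary terms vanish: at `0` because `s log² s → 0`, and at `π/2` because
`|tan θ · log (sin θ)| ≤ cos θ`. Both integrands are nonnegative, so they are integrable as soon as
the antiderivatives are continuous on `[0, π/2]`. Hence `K_1 = √2` and `K_2 = 2√2 log 2`; with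
`a_2 = 1` and `a_4 = 3` this gives `c_2 = 1` and `c_4 = 6 log 2`.
-/

open Real MeasureTheory Set

/-- `H(t) = 4 e^{−t} √(e^{−t} sinh t) / (π (1 − e^{−2t})²)`. -/
noncomputable def H (t : ℝ) : ℝ :=
  4 * Real.exp (-t) * Real.sqrt (Real.exp (-t) * Real.sinh t) /
    (π * (1 - Real.exp (-2 * t)) ^ 2)

/-- `K_q = ∫₀^∞ t^q H(t) dt`. -/
noncomputable def K (q : ℝ) : ℝ := ∫ t in Ioi (0 : ℝ), t ^ q * H t

/-- `a_p = 2^{p/2} Γ((p+1)/2)/√π`, the p-th absolute moment of a standard Gaussian. -/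
noncomputable def a (p : ℝ) : ℝ := 2 ^ (p / 2) * Real.Gamma ((p + 1) / 2) / Real.sqrt π

/-- `c_p = a_p K_{p/2} / √2`. -/
noncomputable def c (p : ℝ) : ℝ := a p * K (p / 2) / Real.sqrt 2

/-- `E(p) = c_{2p}/c_p² + 4 log 2`. -/
noncomputable def E (p : ℝ) : ℝ := c (2 * p) / c p ^ 2 + 4 * Real.log 2

/-! ### The substitution `t = -log (sin θ)` -/

lemma sin_cos_pos {θ : ℝ} (h : θ ∈ Ioo 0 (π / 2)) : 0 < sin θ ∧ 0 < cos θ :=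
  ⟨sin_pos_of_pos_of_lt_pi h.1 (by linarith [h.2, pi_pos]),
    cos_pos_of_mem_Ioo ⟨by linarith [h.1, pi_pos], h.2⟩⟩

lemma image_neg_log_sin : (fun θ : ℝ => -log (sin θ)) '' Ioo 0 (π / 2) = Ioi 0 := by
  ext t
  constructor
  · rintro ⟨θ, hθ, rfl⟩
    obtain ⟨hs, hc⟩ := sin_cos_pos hθ
    have h1 : sin θ < 1 := by nlinarith [sin_sq_add_cos_sq θ]
    have := log_neg hs h1
    simpa using this
  · intro ht
    have ht : 0 < t := ht
    have h0 := exp_pos (-t)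
    have h1 : exp (-t) < 1 := by rw [exp_lt_one_iff]; linarith
    refine ⟨arcsin (exp (-t)), ⟨arcsin_pos.2 h0, arcsin_lt_pi_div_two.2 h1⟩, ?_⟩
    simp only
    rw [sin_arcsin (by linarith) h1.le, log_exp, neg_neg]

lemma injOn_neg_log_sin : InjOn (fun θ : ℝ => -log (sin θ)) (Ioo 0 (π / 2)) := by
  intro x hx y hy h
  have h' : sin x = sin y :=
    log_injOn_pos (sin_cos_pos hx).1 (sin_cos_pos hy).1 (neg_injective h)
  exact injOn_sin ⟨by linarith [hx.1, pi_pos], hx.2.le⟩ ⟨by linarith [hy.1, pi_pos], hy.2.le⟩ h'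

lemma hasDerivAt_log_sin {θ : ℝ} (h : θ ∈ Ioo 0 (π / 2)) :
    HasDerivAt (fun θ => log (sin θ)) (cos θ / sin θ) θ :=
  (hasDerivAt_sin θ).log (sin_cos_pos h).1.ne'

lemma H_neg_log_sin {θ : ℝ} (h : θ ∈ Ioo 0 (π / 2)) :
    H (-log (sin θ)) = 4 / (√2 * π) * (sin θ / cos θ ^ 3) := by
  obtain ⟨hs, hc⟩ := sin_cos_pos h
  have e1 : exp (-(-log (sin θ))) = sin θ := by rw [neg_neg, exp_log hs]
  have e2 : exp (-2 * (-log (sin θ))) = sin θ ^ 2 := by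
    rw [show -2 * (-log (sin θ)) = log (sin θ) + log (sin θ) by ring, exp_add, exp_log hs]; ring
  have e3 : exp (-log (sin θ)) = (sin θ)⁻¹ := by rw [exp_neg, exp_log hs]
  have e4 : sin θ * sinh (-log (sin θ)) = cos θ ^ 2 / 2 := by
    rw [sinh_eq, e1, e3, cos_sq']
    field_simp
  have e5 : √(cos θ ^ 2 / 2) = cos θ / √2 := by
    rw [sqrt_div (sq_nonneg _), sqrt_sq hc.le]
  have e6 : 1 - sin θ ^ 2 = cos θ ^ 2 := (cos_sq' θ).symm
  have := pi_pos
  have h2 : 0 < √(2 : ℝ) := by positivity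
  unfold H
  rw [e1, e2, e4, e5, e6]
  field_simp

lemma K_eq_integral (q : ℝ) :
    K q = 4 / (√2 * π) * ∫ θ in (0 : ℝ)..(π / 2), (-log (sin θ)) ^ q / cos θ ^ 2 := by
  unfold K
  rw [← image_neg_log_sin, integral_image_eq_integral_abs_deriv_smul measurableSet_Ioo
    (fun θ hθ => (hasDerivAt_log_sin hθ).fun_neg.hasDerivWithinAt) injOn_neg_log_sin,
    intervalIntegral.integral_of_le (by positivity), integral_Ioc_eq_integral_Ioo,
    ← integral_const_mul]
  refine setIntegral_congr_fun measurableSet_Ioo fun θ hθ => ?_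
  obtain ⟨hs, hc⟩ := sin_cos_pos hθ
  rw [H_neg_log_sin hθ, abs_neg, abs_of_pos (div_pos hc hs), smul_eq_mul]
  field_simp

/-! ### Boundary behaviour of `tan θ · logⁿ (sin θ)` -/

/-- The bound behind the vanishing of the boundary terms at `π/2`, where the
left side is `0` by the convention `x / 0 = 0`. It follows from `1 - 1/s ≤ log s ≤ 0` and
`1 - s ≤ 1 - s² = cos² θ` with `s = sin θ`. -/
lemma abs_sin_mul_log_sin_div_cos_le {θ : ℝ} (h : θ ∈ Ioc 0 (π / 2)) :
    |sin θ * log (sin θ) / cos θ| ≤ cos θ := by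
  rcases h.2.eq_or_lt with rfl | h2
  · simp
  obtain ⟨hs, hc⟩ := sin_cos_pos ⟨h.1, h2⟩
  have hl := one_sub_inv_le_log_of_pos hs
  have hs1 := sin_le_one θ
  have hl0 := log_nonpos hs.le hs1
  have h3 : sin θ - 1 ≤ sin θ * log (sin θ) := by
    have := mul_le_mul_of_nonneg_left hl hs.le
    rwa [mul_sub, mul_inv_cancel₀ hs.ne', mul_one] at this
  rw [abs_div, abs_of_pos hc, div_le_iff₀ hc,
    abs_of_nonpos (mul_nonpos_of_nonneg_of_nonpos hs.le hl0)]
  nlinarith [sin_sq_add_cos_sq θ]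

lemma continuousWithinAt_pi_div_two :
    ContinuousWithinAt (fun θ => sin θ * log (sin θ) / cos θ) (Icc 0 (π / 2)) (π / 2) := by
  have hev : ∀ᶠ θ in nhdsWithin (π / 2) (Icc 0 (π / 2)),
      ‖sin θ * log (sin θ) / cos θ‖ ≤ cos θ := by
    filter_upwards [self_mem_nhdsWithin,
      mem_nhdsWithin_of_mem_nhds (Ioi_mem_nhds (show (0 : ℝ) < π / 2 by positivity))] with θ h1 h2
    exact abs_sin_mul_log_sin_div_cos_le ⟨h2, h1.2⟩
  have hcos : Filter.Tendsto cos (nhdsWithin (π / 2) (Icc 0 (π / 2))) (nhds 0) := by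
    simpa using (continuous_cos.continuousWithinAt (s := Icc 0 (π / 2)) (x := π / 2)).tendsto
  simpa [ContinuousWithinAt] using squeeze_zero_norm' hev hcos

lemma cos_pos_of_mem_Ico {θ : ℝ} (h : θ ∈ Ico 0 (π / 2)) : 0 < cos θ :=
  cos_pos_of_mem_Ioo ⟨by linarith [h.1, pi_pos], h.2⟩

lemma continuousOn_tan_mul_log :
    ContinuousOn (fun θ => sin θ * log (sin θ) / cos θ) (Icc 0 (π / 2)) := by
  intro θ hθ
  rcases hθ.2.eq_or_lt with rfl | h2
  · exact continuousWithinAt_pi_div_two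
  · exact ((continuous_mul_log.comp continuous_sin).continuousAt.div continuous_cos.continuousAt
      (cos_pos_of_mem_Ico ⟨hθ.1, h2⟩).ne').continuousWithinAt

lemma continuousOn_tan_mul_log_sq :
    ContinuousOn (fun θ => sin θ * log (sin θ) ^ 2 / cos θ) (Icc 0 (π / 2)) := by
  intro θ hθ
  rcases hθ.2.eq_or_lt with rfl | h2
  · have hl : ContinuousWithinAt (fun θ => log (sin θ)) (Icc 0 (π / 2)) (π / 2) :=
      (continuous_sin.continuousAt.log (by simp)).continuousWithinAt
    refine (continuousWithinAt_pi_div_two.mul hl).congr (fun x _ => ?_) ?_ <;>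
      simp only [Pi.mul_apply] <;> ring
  · -- `s log² s = (2 √s log √s)²` reduces continuity at `0` to that of `x log x`
    have hcont : Continuous fun θ => (2 * (√(sin θ) * log √(sin θ))) ^ 2 :=
      (continuous_const.mul
        (continuous_mul_log.comp (continuous_sqrt.comp continuous_sin))).pow 2
    have heq : ∀ x ∈ Icc 0 (π / 2),
        sin x * log (sin x) ^ 2 / cos x = (2 * (√(sin x) * log √(sin x))) ^ 2 / cos x := by
      intro x hx
      have hs : 0 ≤ sin x := sin_nonneg_of_nonneg_of_le_pi hx.1 (by linarith [hx.2, pi_pos])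
      rw [log_sqrt hs, mul_pow, mul_pow, sq_sqrt hs]
      ring
    exact (hcont.continuousAt.div continuous_cos.continuousAt
      (cos_pos_of_mem_Ico ⟨hθ.1, h2⟩).ne').continuousWithinAt.congr heq (heq θ hθ)

/-! ### The two integrals -/

/-- The fundamental theorem of calculus for a nonnegative derivative, whose integrability is then
automatic. -/
lemma integral_eq_of_nonneg {A f : ℝ → ℝ} (hA : ContinuousOn A (Icc 0 (π / 2)))
    (hd : ∀ θ ∈ Ioo 0 (π / 2), HasDerivAt A (f θ) θ) (hf : ∀ θ ∈ Ioo 0 (π / 2), 0 ≤ f θ) :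
    ∫ θ in (0 : ℝ)..(π / 2), f θ = A (π / 2) - A 0 := by
  have hp : (0 : ℝ) ≤ π / 2 := by positivity
  refine intervalIntegral.integral_eq_sub_of_hasDerivAt_of_le hp hA hd ?_
  rw [intervalIntegrable_iff_integrableOn_Ioc_of_le hp]
  exact intervalIntegral.integrableOn_deriv_of_nonneg hA hd hf

lemma integral_log_sin_div_cos_sq :
    ∫ θ in (0 : ℝ)..(π / 2), (-log (sin θ)) / cos θ ^ 2 = π / 2 := by
  rw [integral_eq_of_nonneg (A := fun θ => θ - sin θ * log (sin θ) / cos θ)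
    (continuousOn_id.sub continuousOn_tan_mul_log)]
  · simp
  · intro θ hθ
    obtain ⟨hs, hc⟩ := sin_cos_pos hθ
    refine ((hasDerivAt_id' θ).fun_sub
      (((hasDerivAt_sin θ).fun_mul (hasDerivAt_log_sin hθ)).fun_div
        (hasDerivAt_cos θ) hc.ne')).congr_deriv ?_
    field_simp
    linear_combination (-log (sin θ)) * sin_sq_add_cos_sq θ
  · intro θ hθ
    obtain ⟨hs, hc⟩ := sin_cos_pos hθ
    have := log_nonpos hs.le (sin_le_one θ)
    exact div_nonneg (by linarith) (by positivity)

lemma integral_log_sin_sq_div_cos_sq :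
    ∫ θ in (0 : ℝ)..(π / 2), (-log (sin θ)) ^ 2 / cos θ ^ 2 = π * log 2 := by
  have hlog : ∀ x y : ℝ, IntervalIntegrable (fun θ => log (sin θ)) volume x y :=
    fun x y => intervalIntegrable_log_sin
  rw [integral_eq_of_nonneg
    (A := fun θ => sin θ * log (sin θ) ^ 2 / cos θ - 2 * ∫ x in (0 : ℝ)..θ, log (sin x))]
  · simp only [integral_log_sin_zero_pi_div_two]
    simp
    ring
  · exact continuousOn_tan_mul_log_sq.sub
      (continuousOn_const.mul (intervalIntegral.continuous_primitive hlog 0).continuousOn)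
  · intro θ hθ
    obtain ⟨hs, hc⟩ := sin_cos_pos hθ
    have hmeas : StronglyMeasurable fun θ => log (sin θ) :=
      (measurable_log.comp measurable_sin).stronglyMeasurable
    have hprim : HasDerivAt (fun θ => ∫ x in (0 : ℝ)..θ, log (sin x)) (log (sin θ)) θ :=
      intervalIntegral.integral_hasDerivAt_right (hlog 0 θ)
        hmeas.stronglyMeasurableAtFilter (continuous_sin.continuousAt.log hs.ne')
    refine ((((hasDerivAt_sin θ).fun_mul ((hasDerivAt_log_sin hθ).fun_pow 2)).fun_div
      (hasDerivAt_cos θ) hc.ne').fun_sub (hprim.const_mul 2)).congr_deriv ?_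
    field_simp
    push_cast
    linear_combination log (sin θ) ^ 2 * sin_sq_add_cos_sq θ
  · intro θ _
    positivity

/-! ### The constants `c_2` and `c_4` -/

lemma K_one : K 1 = √2 := by
  have h2 : √(2 : ℝ) ^ 2 = 2 := sq_sqrt (by norm_num)
  have h3 : 0 < √(2 : ℝ) := by positivity
  have := pi_pos
  rw [K_eq_integral]
  simp only [rpow_one]
  rw [integral_log_sin_div_cos_sq]
  field_simp
  rw [h2]
  norm_num

lemma K_two : K 2 = 2 * √2 * log 2 := by
  have h2 : √(2 : ℝ) ^ 2 = 2 := sq_sqrt (by norm_num)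
  have h3 : 0 < √(2 : ℝ) := by positivity
  have := pi_pos
  rw [K_eq_integral]
  simp only [rpow_two]
  rw [integral_log_sin_sq_div_cos_sq]
  field_simp
  rw [h2]
  norm_num

lemma a_two : a 2 = 1 := by
  have h : Gamma ((2 + 1) / 2) = √π / 2 := by
    rw [show ((2 : ℝ) + 1) / 2 = 1 / 2 + 1 by norm_num, Gamma_add_one (by norm_num),
      Gamma_one_half_eq]
    ring
  have := pi_pos
  have hp : 0 < √π := by positivity
  rw [a, h, show (2 : ℝ) / 2 = 1 by norm_num, rpow_one]
  field_simp

lemma a_four : a 4 = 3 := by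
  have h : Gamma ((4 + 1) / 2) = 3 / 4 * √π := by
    rw [show ((4 : ℝ) + 1) / 2 = (1 / 2 + 1) + 1 by norm_num, Gamma_add_one (by norm_num),
      Gamma_add_one (by norm_num), Gamma_one_half_eq]
    ring
  have := pi_pos
  have hp : 0 < √π := by positivity
  rw [a, h, show (4 : ℝ) / 2 = 2 by norm_num, rpow_two]
  field_simp
  norm_num

lemma c_two : c 2 = 1 := by
  have h3 : 0 < √(2 : ℝ) := by positivity
  rw [c, a_two, show (2 : ℝ) / 2 = 1 by norm_num, K_one]
  field_simp

lemma c_four : c 4 = 6 * log 2 := by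
  have h3 : 0 < √(2 : ℝ) := by positivity
  rw [c, a_four, show (4 : ℝ) / 2 = 2 by norm_num, K_two]
  field_simp
  norm_num

/-- `E(2) = 10 log 2`; equivalently, `c_2 = 1` and `c_4 = 6 log 2`. -/
theorem E_two_eq :
    E 2 = 10 * Real.log 2 ∧ c 2 = 1 ∧ c 4 = 6 * Real.log 2 := by
  refine ⟨?_, c_two, c_four⟩
  rw [E, show (2 : ℝ) * 2 = 4 by norm_num, c_two, c_four]
  ring
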